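/- arXiv:1903.03331 — 2 statements merged into one kernel-verified Lean document; each statement's English description precedes it below -/
import Mathlib

section
/- Let A and B be GLP_ω formulas and n a natural number. If A ≡_n B and A ⊢_GLP ⟨n⟩⊤, then A ≡_j B for every natural number j ≤ n. -/
/-- Formulas of polymodal provability logic GLP: propositional variables, ⊤,
Boolean connectives, and a modality `[ξ]` for each ordinal `ξ`. -/
inductive GLPFormula : Type 1 where
  | var : ℕ → GLPFormula
  | top : GLPFormula
  | neg : GLPFormula → GLPFormula
  | and : GLPFormula → GLPFormula → GLPFormula
  | imp : GLPFormula → GLPFormula → GLPFormula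
  | box : Ordinal → GLPFormula → GLPFormula

namespace GLPFormula

/-- `⟨ξ⟩φ` abbreviates `¬[ξ]¬φ`. -/
def dia (ξ : Ordinal) (φ : GLPFormula) : GLPFormula := neg (box ξ (neg φ))

/-- Biconditional, defined from the other connectives. -/
def biimp (φ ψ : GLPFormula) : GLPFormula := and (imp φ ψ) (imp ψ φ)

/-- The set of ordinals occurring as modality indices in a formula. -/
def mods : GLPFormula → Set Ordinal
  | var _ => ∅
  | top => ∅
  | neg φ => mods φ
  | and φ ψ => mods φ ∪ mods ψ
  | imp φ ψ => mods φ ∪ mods ψ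
  | box ξ φ => insert ξ (mods φ)

end GLPFormula

/-- A propositional tautology: true under every Boolean valuation that respects
the Boolean connectives (variables and boxed formulas are treated as atoms). -/
def IsTautology (φ : GLPFormula) : Prop :=
  ∀ v : GLPFormula → Bool,
    v GLPFormula.top = true →
    (∀ ψ, v ψ.neg = !v ψ) →
    (∀ ψ χ, v (ψ.and χ) = (v ψ && v χ)) →
    (∀ ψ χ, v (ψ.imp χ) = (!v ψ || v χ)) →
    v φ = true

/-- Derivability in GLP, with modality indices restricted to the set `S`
(`S = Set.univ` gives full GLP; `S = Set.Iio ω` gives GLP_ω). -/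
inductive GLPProof (S : Set Ordinal) : GLPFormula → Prop where
  | taut {φ} : φ.mods ⊆ S → IsTautology φ → GLPProof S φ
  | distr {ξ φ ψ} : ξ ∈ S → φ.mods ⊆ S → ψ.mods ⊆ S →
      GLPProof S ((GLPFormula.box ξ (φ.imp ψ)).imp
        ((GLPFormula.box ξ φ).imp (GLPFormula.box ξ ψ)))
  | trans {ξ φ} : ξ ∈ S → φ.mods ⊆ S →
      GLPProof S ((GLPFormula.box ξ φ).imp (GLPFormula.box ξ (GLPFormula.box ξ φ)))
  | lob {ξ φ} : ξ ∈ S → φ.mods ⊆ S →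
      GLPProof S ((GLPFormula.box ξ ((GLPFormula.box ξ φ).imp φ)).imp (GLPFormula.box ξ φ))
  | negIntro {ξ ζ φ} : ξ < ζ → ξ ∈ S → ζ ∈ S → φ.mods ⊆ S →
      GLPProof S ((GLPFormula.dia ζ φ).imp (GLPFormula.dia ξ φ))
  | mono {ξ ζ φ} : ξ < ζ → ξ ∈ S → ζ ∈ S → φ.mods ⊆ S →
      GLPProof S ((GLPFormula.dia ξ φ).imp (GLPFormula.box ζ (GLPFormula.dia ξ φ)))
  | mp {φ ψ} : GLPProof S (φ.imp ψ) → GLPProof S φ → GLPProof S ψ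
  | nec {ξ φ} : ξ ∈ S → GLPProof S φ → GLPProof S (GLPFormula.box ξ φ)

/-- Derivability in full GLP (modalities indexed by all ordinals). -/
def GLPProves (φ : GLPFormula) : Prop := GLPProof Set.univ φ

/-- Derivability in GLP_ω (modalities indexed by natural numbers). -/
def GLPomegaProves (φ : GLPFormula) : Prop := GLPProof (Set.Iio Ordinal.omega0) φ

/-- A GLP_ω formula: all modality indices are below ω. -/
def IsOmegaFormula (φ : GLPFormula) : Prop := φ.mods ⊆ Set.Iio Ordinal.omega0

/-- Conjunction of a finite list of formulas. -/
def listConj : List GLPFormula → GLPFormula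
  | [] => GLPFormula.top
  | φ :: l => φ.and (listConj l)

/-- `SetProves S τ χ`: the set `τ` proves `χ`, i.e. `ψ₁ ∧ … ∧ ψₘ → χ` is
derivable for some finite list of members of `τ`. -/
def SetProves (S : Set Ordinal) (τ : Set GLPFormula) (χ : GLPFormula) : Prop :=
  ∃ l : List GLPFormula, (∀ ψ ∈ l, ψ ∈ τ) ∧ GLPProof S ((listConj l).imp χ)

/-- The iterated consistency formulas: `Q n 0 φ = ⊤`, `Q n (k+1) φ = ⟨n⟩(φ ∧ Q n k φ)`. -/
def Q (n : Ordinal) : ℕ → GLPFormula → GLPFormula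
  | 0, _ => GLPFormula.top
  | k + 1, φ => GLPFormula.dia n ((GLPFormula.and φ (Q n k φ)))

/-- `diaPow n k φ` is `⟨n⟩^k φ`, `k` iterated applications of `⟨n⟩`. -/
def diaPow (n : Ordinal) : ℕ → GLPFormula → GLPFormula
  | 0, φ => φ
  | k + 1, φ => GLPFormula.dia n (diaPow n k φ)

/-- The formula corresponding to a worm, given as its list of modality indices:
`[] ↦ ⊤` and `γ :: A ↦ ⟨γ⟩A`. -/
def wormFormula : List Ordinal → GLPFormula
  | [] => GLPFormula.top
  | γ :: A => GLPFormula.dia γ (wormFormula A)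

/-- The generalized `Q`-formula: `Q(⊤,φ) = ⊤`, `Q(⟨γ⟩A, φ) = ⟨γ⟩(φ ∧ Q(A,φ))`. -/
def QWorm : List Ordinal → GLPFormula → GLPFormula
  | [], _ => GLPFormula.top
  | γ :: A, φ => GLPFormula.dia γ (GLPFormula.and φ (QWorm A φ))

/-- `n`-conservativity of two GLP_ω formulas: they prove the same `⟨n⟩`-formulas. -/
def ConservEq (n : ℕ) (A B : GLPFormula) : Prop :=
  ∀ φ : GLPFormula, IsOmegaFormula φ →
    (GLPProves (A.imp (GLPFormula.dia (n : Ordinal) φ)) ↔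
      GLPProves (B.imp (GLPFormula.dia (n : Ordinal) φ)))

/-! Suppose `j < n`. If `⟨j⟩φ` holds, then so does `[n]⟨j⟩φ` by monotonicity, and together with
`⟨n⟩⊤` this gives `⟨n⟩⟨j⟩φ`. Conversely, `⟨n⟩⟨j⟩φ` implies `⟨j⟩⟨j⟩φ` by negative introspection,
hence `⟨j⟩φ` by transitivity. So a formula proving `⟨n⟩⊤` proves `⟨j⟩φ` exactly when it proves the
`⟨n⟩`-formula `⟨n⟩⟨j⟩φ`. Since `⟨n⟩⊤` is itself an `⟨n⟩`-formula, both `A` and `B` prove it. -/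

theorem isOmegaFormula_top : IsOmegaFormula GLPFormula.top :=
  Set.empty_subset _

theorem IsOmegaFormula.dia {ξ : Ordinal} {φ : GLPFormula} (hφ : IsOmegaFormula φ)
    (hξ : ξ < Ordinal.omega0) : IsOmegaFormula (GLPFormula.dia ξ φ) :=
  Set.insert_subset hξ hφ

namespace GLPProves

open GLPFormula

variable {φ ψ χ : GLPFormula} {ξ ζ : Ordinal}

theorem of_isTautology (h : IsTautology φ) : GLPProves φ :=
  GLPProof.taut (Set.subset_univ _) h

theorem imp_mp (h : GLPProves (φ.imp (ψ.imp χ))) (hψ : GLPProves (φ.imp ψ)) :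
    GLPProves (φ.imp χ) := by
  have frege : GLPProves ((φ.imp (ψ.imp χ)).imp ((φ.imp ψ).imp (φ.imp χ))) :=
    of_isTautology fun v _ _ _ himp => by grind
  exact (frege.mp h).mp hψ

theorem imp_imp_self (φ ψ : GLPFormula) : GLPProves (φ.imp (ψ.imp φ)) :=
  of_isTautology fun v _ _ _ himp => by grind

theorem imp_trans (h₁ : GLPProves (φ.imp ψ)) (h₂ : GLPProves (ψ.imp χ)) :
    GLPProves (φ.imp χ) :=
  imp_mp ((imp_imp_self _ φ).mp h₂) h₁

theorem imp_imp_neg_imp_neg (φ ψ : GLPFormula) :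
    GLPProves ((φ.imp ψ).imp (ψ.neg.imp φ.neg)) :=
  of_isTautology fun v _ hneg _ himp => by grind

theorem imp_neg_neg (φ : GLPFormula) : GLPProves (φ.imp φ.neg.neg) :=
  of_isTautology fun v _ hneg _ himp => by grind

theorem box_imp_imp_box_imp_box (ξ : Ordinal) (φ ψ : GLPFormula) :
    GLPProves ((box ξ (φ.imp ψ)).imp ((box ξ φ).imp (box ξ ψ))) :=
  GLPProof.distr trivial (Set.subset_univ _) (Set.subset_univ _)

theorem box_imp_box (ξ : Ordinal) (h : GLPProves (φ.imp ψ)) :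
    GLPProves ((box ξ φ).imp (box ξ ψ)) :=
  (box_imp_imp_box_imp_box ξ φ ψ).mp (GLPProof.nec trivial h)

theorem box_imp_imp_dia_imp_dia (ξ : Ordinal) (φ ψ : GLPFormula) :
    GLPProves ((box ξ (φ.imp ψ)).imp ((dia ξ φ).imp (dia ξ ψ))) := by
  have contrapose_inside :
      GLPProves ((box ξ (φ.imp ψ)).imp (box ξ (ψ.neg.imp φ.neg))) :=
    box_imp_box ξ (imp_imp_neg_imp_neg φ ψ)
  have contrapose_outside :
      GLPProves (((box ξ ψ.neg).imp (box ξ φ.neg)).imp ((dia ξ φ).imp (dia ξ ψ))) :=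
    imp_imp_neg_imp_neg (box ξ ψ.neg) (box ξ φ.neg)
  exact contrapose_inside.imp_trans
    ((box_imp_imp_box_imp_box ξ ψ.neg φ.neg).imp_trans contrapose_outside)

theorem box_imp_dia_imp_dia (ξ : Ordinal) (φ ψ : GLPFormula) :
    GLPProves ((box ξ φ).imp ((dia ξ ψ).imp (dia ξ φ))) :=
  (box_imp_box ξ (imp_imp_self φ ψ)).imp_trans (box_imp_imp_dia_imp_dia ξ ψ φ)

theorem dia_dia_imp_dia (ξ : Ordinal) (φ : GLPFormula) :
    GLPProves ((dia ξ (dia ξ φ)).imp (dia ξ φ)) := by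
  have box_imp_box_box : GLPProves ((box ξ φ.neg).imp (box ξ (box ξ φ.neg))) :=
    GLPProof.trans trivial (Set.subset_univ _)
  have box_imp_box_neg_dia : GLPProves ((box ξ φ.neg).imp (box ξ (dia ξ φ).neg)) :=
    box_imp_box_box.imp_trans (box_imp_box ξ (imp_neg_neg (box ξ φ.neg)))
  exact (imp_imp_neg_imp_neg _ _).mp box_imp_box_neg_dia

theorem dia_imp_box_dia (h : ξ < ζ) (φ : GLPFormula) :
    GLPProves ((dia ξ φ).imp (box ζ (dia ξ φ))) :=
  GLPProof.mono h trivial trivial (Set.subset_univ _)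

theorem dia_imp_dia_of_lt (h : ξ < ζ) (φ : GLPFormula) :
    GLPProves ((dia ζ φ).imp (dia ξ φ)) :=
  GLPProof.negIntro h trivial trivial (Set.subset_univ _)

theorem imp_dia_iff_imp_dia_dia (h : ξ < ζ) (hχ : GLPProves (χ.imp (dia ζ ψ))) :
    GLPProves (χ.imp (dia ξ φ)) ↔ GLPProves (χ.imp (dia ζ (dia ξ φ))) := by
  constructor
  · intro hφ
    have hbox : GLPProves (χ.imp (box ζ (dia ξ φ))) := hφ.imp_trans (dia_imp_box_dia h φ)
    exact (hbox.imp_trans (box_imp_dia_imp_dia ζ (dia ξ φ) ψ)).imp_mp hχ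
  · intro hφ
    have hdia : GLPProves (χ.imp (dia ξ (dia ξ φ))) := hφ.imp_trans (dia_imp_dia_of_lt h _)
    exact hdia.imp_trans (dia_dia_imp_dia ξ φ)

end GLPProves

theorem conservativity_descends_general (A B : GLPFormula) (n : ℕ) (h : ConservEq n A B)
    (hcons : GLPProves (A.imp (GLPFormula.dia (n : Ordinal) GLPFormula.top)))
    (j : ℕ) (hj : j ≤ n) : ConservEq j A B := by
  obtain rfl | hlt := hj.eq_or_lt
  · exact h
  have hjn : (j : Ordinal) < n := Nat.cast_lt.2 hlt
  have hconsB : GLPProves (B.imp (GLPFormula.dia n GLPFormula.top)) :=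
    (h _ isOmegaFormula_top).1 hcons
  intro φ hφ
  rw [GLPProves.imp_dia_iff_imp_dia_dia hjn hcons, GLPProves.imp_dia_iff_imp_dia_dia hjn hconsB]
  exact h _ (hφ.dia (Ordinal.natCast_lt_omega0 j))

/-- If `A ≡_n B` and `A ⊢ ⟨n⟩⊤`, then `A ≡_j B` for every `j ≤ n`. -/
theorem conservativity_descends (A B : GLPFormula) (hA : IsOmegaFormula A)
    (hB : IsOmegaFormula B) (n : ℕ) (h : ConservEq n A B)
    (hcons : GLPProves (A.imp (GLPFormula.dia (n : Ordinal) GLPFormula.top)))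
    (j : ℕ) (hj : j ≤ n) : ConservEq j A B :=
  conservativity_descends_general A B n h hcons j hj
end

section
/- For any GLP formulas ψ and χ: if ⊢_GLP ψ, then ⊢_GLP ψ^χ, where ψ^χ is the formula obtained from ψ by replacing every subformula of the form [ξ]ψ' by [ξ](χ → ψ'). -/
/-- `ψ^χ`: the result of replacing every subformula `[ξ]ψ'` of `ψ` by `[ξ](χ → ψ')`. -/
def relativize (χ : GLPFormula) : GLPFormula → GLPFormula
  | .var p => .var p
  | .top => .top
  | .neg φ => .neg (relativize χ φ)
  | .and φ ψ => .and (relativize χ φ) (relativize χ ψ)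
  | .imp φ ψ => .imp (relativize χ φ) (relativize χ ψ)
  | .box ξ φ => .box ξ (χ.imp (relativize χ φ))

/-!
The relativized modalities `[ξ](χ → ·)` satisfy every axiom and rule of GLP, so relativizing a
derivation line by line gives a derivation. The axioms about `[ξ]` alone follow by applying the
same axiom to `χ → φ` and `χ → ψ` after a propositional rearrangement under the box; for those
about diamonds, `¬[ξ](χ → ¬φ)` is equivalent to `⟨ξ⟩(χ ∧ φ)`, an instance of the original diamond.
-/

namespace GLPFormula

/-- The relativized modality `[ξ](χ → ·)`, by which `relativize χ` replaces `[ξ]`. -/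
def relBox (χ : GLPFormula) (ξ : Ordinal) (φ : GLPFormula) : GLPFormula := box ξ (χ.imp φ)

/-- The dual of `relBox`. It is kept in the form `¬[ξ](χ → ¬φ)`, rather than `⟨ξ⟩(χ ∧ φ)`, so that
`relativize χ` maps `⟨ξ⟩φ` definitionally onto it. -/
def relDia (χ : GLPFormula) (ξ : Ordinal) (φ : GLPFormula) : GLPFormula :=
  neg (relBox χ ξ (neg φ))

theorem mods_relativize_subset (χ φ : GLPFormula) :
    (relativize χ φ).mods ⊆ χ.mods ∪ φ.mods := by
  induction φ <;> simp only [relativize, mods] <;> grind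

end GLPFormula

theorem IsTautology.relativized {φ : GLPFormula} (h : IsTautology φ) (χ : GLPFormula) :
    IsTautology (relativize χ φ) :=
  fun v htop hneg hand himp ↦ h (fun ψ ↦ v (relativize χ ψ)) htop
    (fun _ ↦ hneg _) (fun _ _ ↦ hand _ _) (fun _ _ ↦ himp _ _)

namespace GLPProof

open GLPFormula (box dia relBox relDia)

attribute [local simp] GLPFormula.mods dia relBox relDia Set.insert_subset_iff

variable {S : Set Ordinal} {ξ ζ : Ordinal} {φ ψ θ χ : GLPFormula}

theorem mods_subset (h : GLPProof S φ) : φ.mods ⊆ S := by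
  induction h <;> simp_all

theorem of_isTautology_imp (hφψ : IsTautology (φ.imp ψ)) (hψ : ψ.mods ⊆ S)
    (hφ : GLPProof S φ) : GLPProof S ψ :=
  .mp (.taut (Set.union_subset hφ.mods_subset hψ) hφψ) hφ

theorem imp_trans (hφψ : GLPProof S (φ.imp ψ)) (hψθ : GLPProof S (ψ.imp θ)) :
    GLPProof S (φ.imp θ) := by
  have mods_φψ := hφψ.mods_subset
  have mods_ψθ := hψθ.mods_subset
  exact .mp (of_isTautology_imp (by grind [IsTautology]) (by simp_all) hφψ) hψθ

theorem imp_intro (hχ : χ.mods ⊆ S) (hφ : GLPProof S φ) : GLPProof S (χ.imp φ) :=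
  of_isTautology_imp (by grind [IsTautology]) (Set.union_subset hχ hφ.mods_subset) hφ

theorem contrapose (h : GLPProof S (φ.imp ψ)) : GLPProof S (ψ.neg.imp φ.neg) :=
  have mods_h := h.mods_subset
  of_isTautology_imp (by grind [IsTautology]) (by simp_all) h

theorem box_imp_box (hξ : ξ ∈ S) (h : GLPProof S (φ.imp ψ)) :
    GLPProof S ((box ξ φ).imp (box ξ ψ)) :=
  have mods_h := h.mods_subset
  .mp (.distr hξ (by simp_all) (by simp_all)) (.nec hξ h)

theorem relBox_nec (hξ : ξ ∈ S) (hχ : χ.mods ⊆ S) (hφ : GLPProof S φ) :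
    GLPProof S (relBox χ ξ φ) :=
  .nec hξ (imp_intro hχ hφ)

theorem box_imp_relBox (hξ : ξ ∈ S) (hχ : χ.mods ⊆ S) (hφ : φ.mods ⊆ S) :
    GLPProof S ((box ξ φ).imp (relBox χ ξ φ)) :=
  box_imp_box hξ (.taut (by simp_all) (by grind [IsTautology]))

theorem relBox_distr (hξ : ξ ∈ S) (hχ : χ.mods ⊆ S) (hφ : φ.mods ⊆ S) (hψ : ψ.mods ⊆ S) :
    GLPProof S ((relBox χ ξ (φ.imp ψ)).imp ((relBox χ ξ φ).imp (relBox χ ξ ψ))) := by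
  have imp_distr : GLPProof S ((χ.imp (φ.imp ψ)).imp ((χ.imp φ).imp (χ.imp ψ))) :=
    .taut (by simp_all) (by grind [IsTautology])
  exact imp_trans (box_imp_box hξ imp_distr) (.distr hξ (by simp_all) (by simp_all))

theorem relBox_trans (hξ : ξ ∈ S) (hχ : χ.mods ⊆ S) (hφ : φ.mods ⊆ S) :
    GLPProof S ((relBox χ ξ φ).imp (relBox χ ξ (relBox χ ξ φ))) :=
  imp_trans (.trans hξ (by simp_all)) (box_imp_relBox hξ hχ (by simp_all))

theorem relBox_lob (hξ : ξ ∈ S) (hχ : χ.mods ⊆ S) (hφ : φ.mods ⊆ S) :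
    GLPProof S ((relBox χ ξ ((relBox χ ξ φ).imp φ)).imp (relBox χ ξ φ)) := by
  have imp_swap :
      GLPProof S ((χ.imp ((relBox χ ξ φ).imp φ)).imp ((relBox χ ξ φ).imp (χ.imp φ))) :=
    .taut (by simp_all) (by grind [IsTautology])
  exact imp_trans (box_imp_box hξ imp_swap) (.lob hξ (by simp_all))

theorem relDia_imp_dia_and (hξ : ξ ∈ S) (hχ : χ.mods ⊆ S) (hφ : φ.mods ⊆ S) :
    GLPProof S ((relDia χ ξ φ).imp (dia ξ (χ.and φ))) := by
  have not_and_imp : GLPProof S ((χ.and φ).neg.imp (χ.imp φ.neg)) :=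
    .taut (by simp_all) (by grind [IsTautology])
  exact contrapose (box_imp_box hξ not_and_imp)

theorem dia_and_imp_relDia (hξ : ξ ∈ S) (hχ : χ.mods ⊆ S) (hφ : φ.mods ⊆ S) :
    GLPProof S ((dia ξ (χ.and φ)).imp (relDia χ ξ φ)) := by
  have imp_not_and : GLPProof S ((χ.imp φ.neg).imp (χ.and φ).neg) :=
    .taut (by simp_all) (by grind [IsTautology])
  exact contrapose (box_imp_box hξ imp_not_and)

theorem relDia_negIntro (hξζ : ξ < ζ) (hξ : ξ ∈ S) (hζ : ζ ∈ S) (hχ : χ.mods ⊆ S)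
    (hφ : φ.mods ⊆ S) : GLPProof S ((relDia χ ζ φ).imp (relDia χ ξ φ)) := by
  have dia_and_negIntro : GLPProof S ((dia ζ (χ.and φ)).imp (dia ξ (χ.and φ))) :=
    .negIntro hξζ hξ hζ (Set.union_subset hχ hφ)
  exact imp_trans (relDia_imp_dia_and hζ hχ hφ)
    (imp_trans dia_and_negIntro (dia_and_imp_relDia hξ hχ hφ))

theorem relDia_mono (hξζ : ξ < ζ) (hξ : ξ ∈ S) (hζ : ζ ∈ S) (hχ : χ.mods ⊆ S)
    (hφ : φ.mods ⊆ S) : GLPProof S ((relDia χ ξ φ).imp (relBox χ ζ (relDia χ ξ φ))) := by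
  have dia_and_mono : GLPProof S ((dia ξ (χ.and φ)).imp (box ζ (dia ξ (χ.and φ)))) :=
    .mono hξζ hξ hζ (Set.union_subset hχ hφ)
  have relDia_imp_box : GLPProof S ((relDia χ ξ φ).imp (box ζ (relDia χ ξ φ))) :=
    imp_trans (relDia_imp_dia_and hξ hχ hφ)
      (imp_trans dia_and_mono (box_imp_box hζ (dia_and_imp_relDia hξ hχ hφ)))
  exact imp_trans relDia_imp_box (box_imp_relBox hζ hχ (by simp_all))

end GLPProof

theorem relativize_provable_general {S : Set Ordinal} {ψ χ : GLPFormula} (hχ : χ.mods ⊆ S)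
    (h : GLPProof S ψ) : GLPProof S (relativize χ ψ) := by
  have mods_rel {φ : GLPFormula} (hφ : φ.mods ⊆ S) : (relativize χ φ).mods ⊆ S :=
    (GLPFormula.mods_relativize_subset χ φ).trans (Set.union_subset hχ hφ)
  induction h with
  | taut hφ htaut => exact .taut (mods_rel hφ) (htaut.relativized χ)
  | distr hξ hφ hψ => exact .relBox_distr hξ hχ (mods_rel hφ) (mods_rel hψ)
  | trans hξ hφ => exact .relBox_trans hξ hχ (mods_rel hφ)
  | lob hξ hφ => exact .relBox_lob hξ hχ (mods_rel hφ)
  | negIntro hξζ hξ hζ hφ => exact .relDia_negIntro hξζ hξ hζ hχ (mods_rel hφ)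
  | mono hξζ hξ hζ hφ => exact .relDia_mono hξζ hξ hζ hχ (mods_rel hφ)
  | mp _ _ ih_imp ih => exact .mp ih_imp ih
  | nec hξ _ ih => exact .relBox_nec hξ hχ ih

/-- If `⊢_GLP ψ` then `⊢_GLP ψ^χ`. -/
theorem relativize_provable (ψ χ : GLPFormula) (h : GLPProves ψ) :
    GLPProves (relativize χ ψ) :=
  relativize_provable_general (Set.subset_univ _) h
end
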